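/- Let u be a C² strictly convex function on B_R(0) ⊂ ℝ² with ∂_{x₁x₁}u > 0, solving det D²u = f in B_R(0) with f > 0, and let u* be its partial Legendre transform in the e₁-direction with associated map 𝒫(x₁,x₂) = (∂_{x₁}u(x₁,x₂), x₂). Then u* satisfies the quasilinear elliptic equation f(∂_{y₁}u*(y), y₂) · ∂_{y₁y₁}u*(y) + ∂_{y₂y₂}u*(y) = 0 at every point y of the open set 𝒫(B_R(0)). In particular, if f ≡ 1 then u* is harmonic on 𝒫(B_R(0)). -/

import Mathlib

open Metric Set MeasureTheory

noncomputable section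

abbrev E2 : Type := EuclideanSpace ℝ (Fin 2)

/-- The point of `ℝ²` with coordinates `(a, b)`. -/
def pt (a b : ℝ) : E2 := (WithLp.equiv 2 (Fin 2 → ℝ)).symm ![a, b]

/-- The standard basis vectors of `ℝ²`. -/
def e2 (i : Fin 2) : E2 := EuclideanSpace.single i 1

/-- The Hessian matrix `D²u(x)`. -/
def hess (u : E2 → ℝ) (x : E2) : Matrix (Fin 2) (Fin 2) ℝ :=
  Matrix.of fun i j => iteratedFDeriv ℝ 2 u x ![e2 i, e2 j]

/-- The determinant of the Hessian, `det D²u(x)`. -/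
def detHess (u : E2 → ℝ) (x : E2) : ℝ := (hess u x).det

/-- The operator norm of a `2 × 2` real matrix. -/
def opNorm2 (M : Matrix (Fin 2) (Fin 2) ℝ) : ℝ :=
  ‖(Matrix.toEuclideanCLM (𝕜 := ℝ) M : E2 →L[ℝ] E2)‖

/-- The partial Legendre transform of `u` in the `e₁`-direction (relative to `B_R(0)`). -/
def pLeg (R : ℝ) (u : E2 → ℝ) (y : E2) : ℝ :=
  sSup ((fun x₁ => x₁ * y 0 - u (pt x₁ (y 1))) '' {x₁ : ℝ | pt x₁ (y 1) ∈ ball (0:E2) R})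

/-- The partial Legendre map `𝒫(x₁,x₂) = (∂_{x₁}u(x), x₂)`. -/
def Pmap (u : E2 → ℝ) (x : E2) : E2 := pt (fderiv ℝ u x (e2 0)) (x 1)

/-!
Write `P` for the partial Legendre map. Since `∂₁₁u > 0`, the function `u` is convex in `x₁`, so the
supremum defining `u*` at `P x` is attained at `x₁`, and `u* ∘ P = x₁ ∂₁u - u`. As `P` is a local
diffeomorphism where `∂₁₁u ≠ 0`, this identity can be differentiated: first
`∇u* ∘ P = (x₁, -∂₂u)`, and then, by the same principle, `∂₁₁u* ∘ P = 1 / ∂₁₁u` and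
`∂₂₂u* ∘ P = -det D²u / ∂₁₁u`.
-/

open Filter Topology

section Calculus

variable {𝕜 E F G : Type*} [NormedAddCommGroup E] [NormedAddCommGroup F] [NormedAddCommGroup G]

theorem hasFDerivAt_of_comp_eventuallyEq [NontriviallyNormedField 𝕜] [NormedSpace 𝕜 E]
    [NormedSpace 𝕜 F] [NormedSpace 𝕜 G] [CompleteSpace E] {φ : E → F} {e : E ≃L[𝕜] F} {x : E}
    {v : F → G} {w : E → G} {w' : E →L[𝕜] G} (hφ : HasStrictFDerivAt φ (e : E →L[𝕜] F) x)
    (hw : HasFDerivAt w w' x) (hvw : v ∘ φ =ᶠ[𝓝 x] w) :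
    HasFDerivAt v (w' ∘L (e.symm : F →L[𝕜] E)) (φ x) := by
  let ψ := hφ.localInverse φ e x
  have hψ : HasFDerivAt ψ (e.symm : F →L[𝕜] E) (φ x) := hφ.to_localInverse.hasFDerivAt
  have hw_at : HasFDerivAt w w' (ψ (φ x)) := by
    rwa [show ψ (φ x) = x from hφ.localInverse_apply_image]
  have v_eq : v =ᶠ[𝓝 (φ x)] w ∘ ψ := by
    filter_upwards [hφ.eventually_right_inverse, hφ.localInverse_tendsto.eventually hvw]
      with y hright hy
    rw [Function.comp_apply, ← hy, Function.comp_apply, hright]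
  exact (hw_at.comp (φ x) hψ).congr_of_eventuallyEq v_eq

theorem hasStrictFDerivAt_fderiv_apply [RCLike 𝕜] [NormedSpace 𝕜 E] [NormedSpace 𝕜 F]
    {u : E → F} {x : E} (hu : ContDiffAt 𝕜 2 u x) (a : E) :
    HasStrictFDerivAt (fun z => fderiv 𝕜 u z a) ((fderiv 𝕜 (fderiv 𝕜 u) x).flip a) x := by
  have hfderiv : ContDiffAt 𝕜 1 (fderiv 𝕜 u) x := hu.fderiv_right (by norm_num)
  exact (ContinuousLinearMap.apply 𝕜 F a).hasStrictFDerivAt.comp x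
    (hfderiv.hasStrictFDerivAt one_ne_zero)

end Calculus

section Convexity

variable {E : Type*} [NormedAddCommGroup E] [NormedSpace ℝ E]

theorem convexOn_line_of_fderiv_fderiv_nonneg {s : Set E} {u : E → ℝ} {a d : E} (hs : IsOpen s)
    (hsc : Convex ℝ s) (hu : ContDiffOn ℝ 2 u s)
    (hnonneg : ∀ x ∈ s, 0 ≤ fderiv ℝ (fderiv ℝ u) x d d) :
    ConvexOn ℝ {t : ℝ | a + t • d ∈ s} (fun t => u (a + t • d)) := by
  have hline (t : ℝ) : HasDerivAt (fun t : ℝ => a + t • d) d t := by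
    simpa using ((hasDerivAt_id t).smul_const d).const_add a
  have hslice : IsOpen {t : ℝ | a + t • d ∈ s} := hs.preimage (by fun_prop)
  have hcd {x : E} (hx : x ∈ s) : ContDiffAt ℝ 2 u x := hu.contDiffAt (hs.mem_nhds hx)
  have hderiv {t : ℝ} (ht : a + t • d ∈ s) :
      HasDerivAt (fun t => u (a + t • d)) (fderiv ℝ u (a + t • d) d) t :=
    ((hcd ht).differentiableAt two_ne_zero).hasFDerivAt.comp_hasDerivAt t (hline t)
  have hderiv₂ {t : ℝ} (ht : a + t • d ∈ s) :
      HasDerivAt (deriv fun t => u (a + t • d)) (fderiv ℝ (fderiv ℝ u) (a + t • d) d d) t := by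
    have hfderiv := (hasStrictFDerivAt_fderiv_apply (hcd ht) d).hasFDerivAt
    have hcomp := hfderiv.comp_hasDerivAt t (hline t)
    refine hcomp.congr_of_eventuallyEq ?_
    filter_upwards [hslice.mem_nhds ht] with r hr using (hderiv hr).deriv
  have hconvex : Convex ℝ {t : ℝ | a + t • d ∈ s} := by
    convert! hsc.affine_preimage (AffineMap.lineMap a (a + d) : ℝ →ᵃ[ℝ] E) using 1
    ext t
    simp [AffineMap.lineMap_apply, add_comm]
  refine convexOn_of_deriv2_nonneg' hconvex
    (fun t ht => (hderiv ht).differentiableAt.differentiableWithinAt)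
    (fun t ht => (hderiv₂ ht).differentiableAt.differentiableWithinAt) fun t ht => ?_
  simpa [(hderiv₂ ht).deriv] using hnonneg _ ht

theorem isGreatest_mul_sub_image_of_hasDerivAt {S : Set ℝ} {φ : ℝ → ℝ} {t p : ℝ}
    (hφ : ConvexOn ℝ S φ) (ht : t ∈ S) (hderiv : HasDerivAt φ p t) :
    IsGreatest ((fun r => r * p - φ r) '' S) (t * p - φ t) := by
  refine ⟨mem_image_of_mem _ ht, ?_⟩
  rintro _ ⟨r, hr, rfl⟩
  have tangent_le : p * (r - t) ≤ φ r - φ t := by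
    rcases lt_trichotomy t r with htr | rfl | hrt
    · have hslope := hφ.le_slope_of_hasDerivAt ht hr htr hderiv
      rwa [slope_def_field, le_div_iff₀ (sub_pos.2 htr)] at hslope
    · simp
    · have hslope := hφ.slope_le_of_hasDerivAt hr ht hrt hderiv
      rw [slope_def_field, div_le_iff₀ (sub_pos.2 hrt)] at hslope
      linarith
  dsimp only
  linarith

end Convexity

section Coordinates

@[simp]
theorem pt_zero (a b : ℝ) : pt a b 0 = a := by simp [pt]

@[simp]
theorem pt_one (a b : ℝ) : pt a b 1 = b := by simp [pt]

@[simp]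
theorem pt_coords (x : E2) : pt (x 0) (x 1) = x := by
  ext i; fin_cases i <;> simp

@[simp]
theorem e2_apply (i j : Fin 2) : e2 i j = if j = i then 1 else 0 := by
  simp [e2]

theorem pt_eq_smul_add_smul (a b : ℝ) : pt a b = a • e2 0 + b • e2 1 := by
  ext i; fin_cases i <;> simp

theorem clm_apply_eq_smul_add_smul {F : Type*} [AddCommGroup F] [Module ℝ F] [TopologicalSpace F]
    (L : E2 →L[ℝ] F) (x : E2) : L x = x 0 • L (e2 0) + x 1 • L (e2 1) := by
  rw [← map_smul, ← map_smul, ← map_add, ← pt_eq_smul_add_smul, pt_coords]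

theorem hess_eq_fderiv_fderiv (u : E2 → ℝ) (x : E2) (i j : Fin 2) :
    hess u x i j = fderiv ℝ (fderiv ℝ u) x (e2 i) (e2 j) := by
  simp [hess, iteratedFDeriv_two_apply]

theorem continuousAt_hess {u : E2 → ℝ} {x : E2} (hu : ContDiffAt ℝ 2 u x)
    (i j : Fin 2) : ContinuousAt (fun z => hess u z i j) x := by
  simp only [hess_eq_fderiv_fderiv]
  have hfderiv : ContDiffAt ℝ 1 (fderiv ℝ u) x := hu.fderiv_right (by norm_num)
  have hcont : ContinuousAt (fderiv ℝ (fderiv ℝ u)) x :=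
    (hfderiv.fderiv_right (m := 0) (by norm_num)).continuousAt
  fun_prop

end Coordinates

section PartialLegendreMap

/-- The linear automorphism `ξ ↦ (ℓ ξ, ξ₂)` of the plane, for a functional `ℓ` not vanishing on
`e₁`: the shape of the derivative of any map that fixes the second coordinate. -/
def shearEquiv (ℓ : E2 →L[ℝ] ℝ) (hℓ : ℓ (e2 0) ≠ 0) : E2 ≃L[ℝ] E2 :=
  LinearEquiv.toContinuousLinearEquiv
    { toFun ξ := pt (ℓ ξ) (ξ 1)
      invFun η := pt ((ℓ (e2 0))⁻¹ * (η 0 - η 1 * ℓ (e2 1))) (η 1)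
      map_add' ξ η := by ext i; fin_cases i <;> simp
      map_smul' c ξ := by ext i; fin_cases i <;> simp
      left_inv ξ := by
        have hξ := clm_apply_eq_smul_add_smul ℓ ξ
        ext i; fin_cases i <;> simp [hξ, field]
      right_inv η := by
        have hinv (a : ℝ) := clm_apply_eq_smul_add_smul ℓ (pt a (η 1))
        ext i; fin_cases i <;> simp [hinv, field] }

/-- The derivative of the partial Legendre map `𝒫` at `x`, as a linear automorphism of the plane:
its first component is the derivative of `∂₁u`, its second one the coordinate `ξ₂`. -/
def PmapFDeriv (u : E2 → ℝ) (x : E2) (h11 : hess u x 0 0 ≠ 0) : E2 ≃L[ℝ] E2 :=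
  shearEquiv ((fderiv ℝ (fderiv ℝ u) x).flip (e2 0)) (by simpa [hess_eq_fderiv_fderiv] using h11)

variable {u : E2 → ℝ} {x : E2}

theorem PmapFDeriv_apply (h11 : hess u x 0 0 ≠ 0) (ξ : E2) :
    PmapFDeriv u x h11 ξ = pt (fderiv ℝ (fderiv ℝ u) x ξ (e2 0)) (ξ 1) :=
  rfl

theorem PmapFDeriv_symm_e2_zero (h11 : hess u x 0 0 ≠ 0) :
    (PmapFDeriv u x h11).symm (e2 0) = (hess u x 0 0)⁻¹ • e2 0 := by
  rw [ContinuousLinearEquiv.symm_apply_eq, PmapFDeriv_apply, map_smul, smul_apply,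
    ← hess_eq_fderiv_fderiv]
  ext i; fin_cases i <;> simp [h11]

theorem PmapFDeriv_symm_e2_one (h11 : hess u x 0 0 ≠ 0) :
    (PmapFDeriv u x h11).symm (e2 1) = e2 1 - (hess u x 1 0 / hess u x 0 0) • e2 0 := by
  rw [ContinuousLinearEquiv.symm_apply_eq, PmapFDeriv_apply, map_sub, map_smul, sub_apply,
    smul_apply, ← hess_eq_fderiv_fderiv, ← hess_eq_fderiv_fderiv]
  ext i; fin_cases i <;> simp [h11]

theorem hasStrictFDerivAt_Pmap (hu : ContDiffAt ℝ 2 u x) (h11 : hess u x 0 0 ≠ 0) :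
    HasStrictFDerivAt (Pmap u) (PmapFDeriv u x h11 : E2 →L[ℝ] E2) x := by
  have hP : Pmap u =
      fun z => fderiv ℝ u z (e2 0) • e2 0 + (EuclideanSpace.proj 1 : E2 →L[ℝ] ℝ) z • e2 1 :=
    funext fun z => pt_eq_smul_add_smul _ _
  rw [hP]
  convert! ((hasStrictFDerivAt_fderiv_apply hu (e2 0)).smul_const (e2 0)).add
    ((EuclideanSpace.proj 1 : E2 →L[ℝ] ℝ).hasStrictFDerivAt.smul_const (e2 1)) using 1
  ext1 ξ
  exact pt_eq_smul_add_smul _ _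

end PartialLegendreMap

section LocalTransform

/-- The function `x₁ ∂₁u - u`, which is the partial Legendre transform of `u` read in the
variable `x` instead of `y = 𝒫 x`. -/
def legendreValue (u : E2 → ℝ) (x : E2) : ℝ :=
  x 0 * fderiv ℝ u x (e2 0) - u x

/-- The covector `(x₁, -∂₂u)`, which is the gradient of the partial Legendre transform of `u` read
in the variable `x` instead of `y = 𝒫 x`. -/
def legendreGradient (u : E2 → ℝ) (x : E2) : E2 →L[ℝ] ℝ :=
  x 0 • EuclideanSpace.proj 0 - fderiv ℝ u x (e2 1) • EuclideanSpace.proj 1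

variable {u v : E2 → ℝ} {x : E2}

theorem legendreGradient_apply (u : E2 → ℝ) (x ξ : E2) :
    legendreGradient u x ξ = x 0 * ξ 0 - fderiv ℝ u x (e2 1) * ξ 1 :=
  rfl

theorem hasFDerivAt_legendreValue (hu : ContDiffAt ℝ 2 u x) (h11 : hess u x 0 0 ≠ 0) :
    HasFDerivAt (legendreValue u)
      (legendreGradient u x ∘L (PmapFDeriv u x h11 : E2 →L[ℝ] E2)) x := by
  have hu' : HasFDerivAt u (fderiv ℝ u x) x := (hu.differentiableAt two_ne_zero).hasFDerivAt
  have hu₁ := (hasStrictFDerivAt_fderiv_apply hu (e2 0)).hasFDerivAt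
  convert! ((PiLp.hasFDerivAt_apply 2 x 0).mul hu₁).sub hu' using 1
  ext1 ξ
  have hξ := clm_apply_eq_smul_add_smul (fderiv ℝ u x) ξ
  simp only [ContinuousLinearMap.comp_apply, ContinuousLinearEquiv.coe_coe, PmapFDeriv_apply,
    legendreGradient_apply, pt_zero, pt_one, sub_apply, add_apply, smul_apply,
    ContinuousLinearMap.flip_apply, smul_eq_mul, PiLp.proj_apply, hξ]
  ring

theorem hasFDerivAt_legendreGradient (hu : ContDiffAt ℝ 2 u x) :
    HasFDerivAt (legendreGradient u)
      ((EuclideanSpace.proj 0 : E2 →L[ℝ] ℝ).smulRight (EuclideanSpace.proj 0 : E2 →L[ℝ] ℝ) -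
        ((fderiv ℝ (fderiv ℝ u) x).flip (e2 1)).smulRight
          (EuclideanSpace.proj 1 : E2 →L[ℝ] ℝ)) x := by
  have hu₂ := (hasStrictFDerivAt_fderiv_apply hu (e2 1)).hasFDerivAt
  exact ((PiLp.hasFDerivAt_apply 2 x 0).smul_const _).sub
    (hu₂.smul_const (EuclideanSpace.proj 1 : E2 →L[ℝ] ℝ))

theorem fderiv_Pmap_eq_legendreGradient (hu : ContDiffAt ℝ 2 u x) (h11 : hess u x 0 0 ≠ 0)
    (hv : v ∘ Pmap u =ᶠ[𝓝 x] legendreValue u) :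
    fderiv ℝ v (Pmap u x) = legendreGradient u x := by
  have hderiv := hasFDerivAt_of_comp_eventuallyEq (hasStrictFDerivAt_Pmap hu h11)
    (hasFDerivAt_legendreValue hu h11) hv
  rw [hderiv.fderiv]
  ext1 η
  simp

theorem fderiv_comp_Pmap_eventuallyEq (hu : ContDiffAt ℝ 2 u x) (h11 : hess u x 0 0 ≠ 0)
    (hv : v ∘ Pmap u =ᶠ[𝓝 x] legendreValue u) :
    fderiv ℝ v ∘ Pmap u =ᶠ[𝓝 x] legendreGradient u := by
  filter_upwards [hu.eventually (by simp), (continuousAt_hess hu 0 0).eventually_ne h11,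
    hv.eventually_nhds] with z hu_z h11_z hv_z
  exact fderiv_Pmap_eq_legendreGradient hu_z h11_z hv_z

theorem hess_Pmap_apply (hu : ContDiffAt ℝ 2 u x) (h11 : hess u x 0 0 ≠ 0)
    (hv : v ∘ Pmap u =ᶠ[𝓝 x] legendreValue u) (i j : Fin 2) :
    hess v (Pmap u x) i j =
      (PmapFDeriv u x h11).symm (e2 i) 0 * e2 j 0 -
        fderiv ℝ (fderiv ℝ u) x ((PmapFDeriv u x h11).symm (e2 i)) (e2 1) * e2 j 1 := by
  have hderiv := hasFDerivAt_of_comp_eventuallyEq (hasStrictFDerivAt_Pmap hu h11)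
    (hasFDerivAt_legendreGradient hu) (fderiv_comp_Pmap_eventuallyEq hu h11 hv)
  rw [hess_eq_fderiv_fderiv, hderiv.fderiv]
  rfl

theorem hess_Pmap_zero_zero (hu : ContDiffAt ℝ 2 u x) (h11 : hess u x 0 0 ≠ 0)
    (hv : v ∘ Pmap u =ᶠ[𝓝 x] legendreValue u) :
    hess v (Pmap u x) 0 0 = (hess u x 0 0)⁻¹ := by
  rw [hess_Pmap_apply hu h11 hv, PmapFDeriv_symm_e2_zero]
  simp

theorem hess_Pmap_one_one (hu : ContDiffAt ℝ 2 u x) (h11 : hess u x 0 0 ≠ 0)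
    (hv : v ∘ Pmap u =ᶠ[𝓝 x] legendreValue u) :
    hess v (Pmap u x) 1 1 = -(detHess u x / hess u x 0 0) := by
  have hess_eq : hess v (Pmap u x) 1 1 =
      -(hess u x 1 1 - hess u x 1 0 / hess u x 0 0 * hess u x 0 1) := by
    rw [hess_Pmap_apply hu h11 hv, PmapFDeriv_symm_e2_one]
    simp [hess_eq_fderiv_fderiv]
  rw [hess_eq, detHess, Matrix.det_fin_two]
  field

theorem detHess_mul_hess_Pmap_add_hess_Pmap (hu : ContDiffAt ℝ 2 u x) (h11 : hess u x 0 0 ≠ 0)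
    (hv : v ∘ Pmap u =ᶠ[𝓝 x] legendreValue u) :
    detHess u x * hess v (Pmap u x) 0 0 + hess v (Pmap u x) 1 1 = 0 := by
  rw [hess_Pmap_zero_zero hu h11 hv, hess_Pmap_one_one hu h11 hv, div_eq_mul_inv, add_neg_cancel]

theorem pt_fderiv_Pmap (hu : ContDiffAt ℝ 2 u x) (h11 : hess u x 0 0 ≠ 0)
    (hv : v ∘ Pmap u =ᶠ[𝓝 x] legendreValue u) :
    pt (fderiv ℝ v (Pmap u x) (e2 0)) (Pmap u x 1) = x := by
  rw [fderiv_Pmap_eq_legendreGradient hu h11 hv, legendreGradient_apply]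
  simp [Pmap]

end LocalTransform

section Transform

variable {R : ℝ} {u : E2 → ℝ} {x : E2}

theorem convexOn_horizontal_slice {s : Set E2} (hs : IsOpen s) (hsc : Convex ℝ s)
    (hu : ContDiffOn ℝ 2 u s) (h11 : ∀ z ∈ s, 0 ≤ hess u z 0 0) (b : ℝ) :
    ConvexOn ℝ {t | pt t b ∈ s} (fun t => u (pt t b)) := by
  simp only [pt_eq_smul_add_smul, add_comm _ (b • e2 1)]
  exact convexOn_line_of_fderiv_fderiv_nonneg hs hsc hu fun z hz =>
    (h11 z hz).trans_eq (hess_eq_fderiv_fderiv u z 0 0)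

theorem hasDerivAt_horizontal_slice (hu : DifferentiableAt ℝ u x) :
    HasDerivAt (fun t => u (pt t (x 1))) (fderiv ℝ u x (e2 0)) (x 0) := by
  have hline : HasDerivAt (fun t => pt t (x 1)) (e2 0) (x 0) := by
    simpa [pt_eq_smul_add_smul] using
      ((hasDerivAt_id (x 0)).smul_const (e2 0)).add_const (x 1 • e2 1)
  refine HasFDerivAt.comp_hasDerivAt (x 0) ?_ hline
  simpa using hu.hasFDerivAt

theorem pLeg_Pmap (hx : x ∈ ball (0 : E2) R) (hu : DifferentiableAt ℝ u x)
    (hconv : ConvexOn ℝ {t | pt t (x 1) ∈ ball (0 : E2) R} (fun t => u (pt t (x 1)))) :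
    pLeg R u (Pmap u x) = legendreValue u x := by
  have hgreatest := isGreatest_mul_sub_image_of_hasDerivAt hconv (by simpa using hx)
    (hasDerivAt_horizontal_slice hu)
  simpa [pLeg, Pmap, legendreValue] using hgreatest.csSup_eq

theorem pLeg_comp_Pmap_eventuallyEq (hu : ContDiffOn ℝ 2 u (ball (0 : E2) R))
    (h11 : ∀ z ∈ ball (0 : E2) R, 0 ≤ hess u z 0 0) (hx : x ∈ ball (0 : E2) R) :
    pLeg R u ∘ Pmap u =ᶠ[𝓝 x] legendreValue u := by
  filter_upwards [isOpen_ball.mem_nhds hx] with z hz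
  exact pLeg_Pmap hz ((hu.contDiffAt (isOpen_ball.mem_nhds hz)).differentiableAt two_ne_zero)
    (convexOn_horizontal_slice isOpen_ball (convex_ball 0 R) hu h11 (z 1))

end Transform

theorem partialLegendre_quasilinear_equation_general
    (R : ℝ) (u f : E2 → ℝ)
    (hu : ContDiffOn ℝ 2 u (ball (0 : E2) R))
    (h11 : ∀ x ∈ ball (0 : E2) R, 0 < hess u x 0 0)
    (hMA : ∀ x ∈ ball (0 : E2) R, detHess u x = f x) :
    (∀ y ∈ Pmap u '' ball (0 : E2) R,
      f (pt (fderiv ℝ (pLeg R u) y (e2 0)) (y 1)) * hess (pLeg R u) y 0 0 +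
        hess (pLeg R u) y 1 1 = 0) ∧
    ((∀ x ∈ ball (0 : E2) R, f x = 1) →
      ∀ y ∈ Pmap u '' ball (0 : E2) R,
        hess (pLeg R u) y 0 0 + hess (pLeg R u) y 1 1 = 0) := by
  have hu_at {x : E2} (hx : x ∈ ball (0 : E2) R) : ContDiffAt ℝ 2 u x :=
    hu.contDiffAt (isOpen_ball.mem_nhds hx)
  have hpLeg {x : E2} (hx : x ∈ ball (0 : E2) R) : pLeg R u ∘ Pmap u =ᶠ[𝓝 x] legendreValue u :=
    pLeg_comp_Pmap_eventuallyEq hu (fun z hz => (h11 z hz).le) hx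
  have equation {x : E2} (hx : x ∈ ball (0 : E2) R) :
      f x * hess (pLeg R u) (Pmap u x) 0 0 + hess (pLeg R u) (Pmap u x) 1 1 = 0 :=
    hMA x hx ▸ detHess_mul_hess_Pmap_add_hess_Pmap (hu_at hx) (h11 x hx).ne' (hpLeg hx)
  refine ⟨?_, fun hf => ?_⟩
  · rintro _ ⟨x, hx, rfl⟩
    rw [pt_fderiv_Pmap (hu_at hx) (h11 x hx).ne' (hpLeg hx)]
    exact equation hx
  · rintro _ ⟨x, hx, rfl⟩
    simpa only [hf x hx, one_mul] using equation hx

/-- under the hypotheses of Statement 7, the partial Legendre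
transform u* satisfies the quasilinear equation
f(∂_{y₁}u*(y), y₂) ∂_{y₁y₁}u*(y) + ∂_{y₂y₂}u*(y) = 0 on 𝒫(B_R(0)); in particular,
if f ≡ 1 then u* is harmonic on 𝒫(B_R(0)). -/
theorem partialLegendre_quasilinear_equation
    (R : ℝ) (hR : 0 < R) (u f : E2 → ℝ)
    (hu : ContDiffOn ℝ 2 u (ball (0:E2) R))
    (hconv : StrictConvexOn ℝ (ball (0:E2) R) u)
    (h11 : ∀ x ∈ ball (0:E2) R, 0 < hess u x 0 0)
    (hMA : ∀ x ∈ ball (0:E2) R, detHess u x = f x)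
    (hfpos : ∀ x ∈ ball (0:E2) R, 0 < f x) :
    (∀ y ∈ Pmap u '' ball (0:E2) R,
      f (pt (fderiv ℝ (pLeg R u) y (e2 0)) (y 1)) * hess (pLeg R u) y 0 0 +
        hess (pLeg R u) y 1 1 = 0) ∧
    ((∀ x ∈ ball (0:E2) R, f x = 1) →
      ∀ y ∈ Pmap u '' ball (0:E2) R,
        hess (pLeg R u) y 0 0 + hess (pLeg R u) y 1 1 = 0) :=
  partialLegendre_quasilinear_equation_general R u f hu h11 hMA
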